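/- (Proposition 6 for the principal component depth.) Suppose D¹ is translation invariant (D¹(ζ + c | ξ_1 + c, …, ξ_n + c) = D¹(ζ | ξ)), scale invariant (D¹(cζ | cξ_1, …, cξ_n) = D¹(ζ | ξ) for c ≠ 0), and upper semicontinuous (its upper level sets at levels α > 0 are closed in ℝ). Then: (a) PCD(λ z | λ x¹, …, λ xⁿ) = PCD(z | x¹, …, xⁿ) for every λ > 0 (FD2); (b) PCD(z + b | x¹ + b, …, xⁿ + b) = PCD(z | x¹, …, xⁿ) for every b in the linear span of {y_1, …, y_m} (restricted FD1); and (c) for every α > 0 the set {z ∈ E : PCD(z | x¹, …, xⁿ) ≥ α} is closed in E (FD5). -/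

import Mathlib

/-!
A depth defined as an infimum over linear functionals inherits its properties one functional at a
time: functionals commute with scaling, they turn the shift by `b` into the shift by `φ b`, and an
upper level set of the infimum is the intersection of the preimages under the functionals of upper
level sets of the univariate depth.
-/

section PhiDepth

variable {𝕜 E F L ι : Type*} [Semiring 𝕜]
  [TopologicalSpace E] [AddCommMonoid E] [Module 𝕜 E]
  [TopologicalSpace F] [AddCommMonoid F] [Module 𝕜 F]

/-- The `Φ`-depth of a point `z` in a data cloud `x`: the infimum, over the maps `φ` in `Φ`, of the
depth `D` of the projected point in the projected cloud. As `L` is only conditionally complete,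
it is meaningful only for nonempty `Φ` and `D` bounded below. -/
noncomputable def phiDepth [InfSet L] (D : F → (ι → F) → L) (Φ : Set (E →L[𝕜] F))
    (z : E) (x : ι → E) : L :=
  sInf ((fun φ => D (φ z) fun i => φ (x i)) '' Φ)

theorem phiDepth_smul [InfSet L] {D : F → (ι → F) → L} {c : 𝕜}
    (hD : ∀ ζ ξ, D (c • ζ) (fun i => c • ξ i) = D ζ ξ) (Φ : Set (E →L[𝕜] F)) (z : E) (x : ι → E) :
    phiDepth D Φ (c • z) (fun i => c • x i) = phiDepth D Φ z x := by
  simp only [phiDepth, map_smul, hD]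

theorem phiDepth_add_right [InfSet L] {D : F → (ι → F) → L}
    (hD : ∀ c ζ ξ, D (ζ + c) (fun i => ξ i + c) = D ζ ξ) (Φ : Set (E →L[𝕜] F)) (z b : E)
    (x : ι → E) :
    phiDepth D Φ (z + b) (fun i => x i + b) = phiDepth D Φ z x := by
  simp only [phiDepth, map_add, hD]

theorem le_phiDepth_iff [ConditionallyCompleteLattice L] {D : F → (ι → F) → L} {a : L}
    (ha : ∀ ζ ξ, a ≤ D ζ ξ) {Φ : Set (E →L[𝕜] F)} (hΦ : Φ.Nonempty) {α : L} {z : E} {x : ι → E} :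
    α ≤ phiDepth D Φ z x ↔ ∀ φ ∈ Φ, α ≤ D (φ z) (fun i => φ (x i)) := by
  have hbdd : BddBelow ((fun φ : E →L[𝕜] F => D (φ z) fun i => φ (x i)) '' Φ) :=
    ⟨a, Set.forall_mem_image.2 fun _ _ => ha _ _⟩
  rw [phiDepth, le_csInf_iff hbdd (hΦ.image _), Set.forall_mem_image]

theorem isClosed_setOf_le_phiDepth [ConditionallyCompleteLattice L] {D : F → (ι → F) → L} {a : L}
    (ha : ∀ ζ ξ, a ≤ D ζ ξ) {Φ : Set (E →L[𝕜] F)} (hΦ : Φ.Nonempty) {α : L}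
    (hα : ∀ ξ, IsClosed {ζ | α ≤ D ζ ξ}) (x : ι → E) :
    IsClosed {z | α ≤ phiDepth D Φ z x} := by
  simp only [le_phiDepth_iff ha hΦ, Set.ofPred_forall]
  exact isClosed_biInter fun φ _ => (hα fun i => φ (x i)).preimage φ.continuous

end PhiDepth

section ComponentFunctionals

variable {E κ : Type*} [SeminormedAddCommGroup E] [InnerProductSpace ℝ E] [Fintype κ]

/-- The functionals `z ↦ ⟨r, γ(z)⟩`, where `γ(z)` collects the inner products of `z` with the family
`y` and `r` runs over the Euclidean unit sphere. The sphere is written out as `∑ j, r j ^ 2 = 1`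
because `κ → ℝ` carries the sup norm. -/
def componentFunctionals (y : κ → E) : Set (E →L[ℝ] ℝ) :=
  (fun r : κ → ℝ => ∑ j, r j • innerSL ℝ (y j)) '' {r | ∑ j, r j ^ 2 = 1}

theorem componentFunctionals_nonempty [Nonempty κ] (y : κ → E) :
    (componentFunctionals y).Nonempty := by
  classical
  obtain ⟨j₀⟩ := ‹Nonempty κ›
  exact Set.Nonempty.image _ ⟨Pi.single j₀ 1, by simp [Pi.single_apply]⟩

theorem phiDepth_componentFunctionals {ι L : Type*} [InfSet L] (D : ℝ → (ι → ℝ) → L) (y : κ → E)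
    (z : E) (x : ι → E) :
    phiDepth D (componentFunctionals y) z x =
      sInf {v | ∃ r : κ → ℝ, ∑ j, r j ^ 2 = 1 ∧
        v = D (∑ j, r j * inner ℝ z (y j)) (fun i => ∑ j, r j * inner ℝ (x i) (y j))} := by
  have apply_eq (r : κ → ℝ) (w : E) :
      (∑ j, r j • innerSL ℝ (y j)) w = ∑ j, r j * inner ℝ w (y j) := by
    simp [real_inner_comm]
  simp only [phiDepth, componentFunctionals, Set.image_image, apply_eq]
  simp only [Set.image, Set.mem_ofPred_eq, eq_comm]

end ComponentFunctionals

theorem principal_component_depth_props_general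
    {E ι κ : Type*} [SeminormedAddCommGroup E] [InnerProductSpace ℝ E] [Fintype κ] [Nonempty κ]
    (y : κ → E)
    (D1 : ℝ → (ι → ℝ) → ℝ)
    (hnonneg : ∀ ζ ξ, 0 ≤ D1 ζ ξ)
    (htrans : ∀ (c ζ : ℝ) (ξ : ι → ℝ), D1 (ζ + c) (fun i => ξ i + c) = D1 ζ ξ)
    (hscale : ∀ c : ℝ, c ≠ 0 → ∀ (ζ : ℝ) (ξ : ι → ℝ),
      D1 (c * ζ) (fun i => c * ξ i) = D1 ζ ξ)
    (husc : ∀ (ξ : ι → ℝ) (α : ℝ), 0 < α → IsClosed {ζ : ℝ | α ≤ D1 ζ ξ})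
    (PCD : E → (ι → E) → ℝ)
    (hPCD : ∀ z x, PCD z x = sInf {v : ℝ | ∃ r : κ → ℝ, (∑ j, r j ^ 2) = 1 ∧
      v = D1 (∑ j, r j * inner ℝ z (y j)) (fun i => ∑ j, r j * inner ℝ (x i) (y j))})
    (x : ι → E) :
    (∀ (z : E) (l : ℝ), l ≠ 0 → PCD (l • z) (fun i => l • x i) = PCD z x) ∧
      (∀ z b : E, PCD (z + b) (fun i => x i + b) = PCD z x) ∧
      (∀ α : ℝ, 0 < α → IsClosed {z : E | α ≤ PCD z x}) := by
  obtain rfl : PCD = phiDepth D1 (componentFunctionals y) := by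
    funext z x
    rw [hPCD, phiDepth_componentFunctionals]
  exact ⟨fun z l hl => phiDepth_smul (hscale l hl) _ z x,
    fun z b => phiDepth_add_right htrans _ z b x,
    fun α hα => isClosed_setOf_le_phiDepth hnonneg (componentFunctionals_nonempty y)
      (fun ξ => husc ξ α hα) x⟩

/-- Proposition 6: the principal component depth is scale invariant, translation
invariant for shifts in the span of the principal components, and upper
semicontinuous, whenever the underlying univariate depth is translation
invariant, scale invariant and upper semicontinuous. -/
theorem principal_component_depth_props
    {E : Type*} [NormedAddCommGroup E] [InnerProductSpace ℝ E]
    {n m : ℕ} (hn : 0 < n) (hm : 0 < m)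
    (y : Fin m → E) (hy : Orthonormal ℝ y)
    (D1 : ℝ → (Fin n → ℝ) → ℝ)
    (hD101 : ∀ ζ ξ, D1 ζ ξ ∈ Set.Icc (0 : ℝ) 1)
    (htrans : ∀ (c ζ : ℝ) (ξ : Fin n → ℝ), D1 (ζ + c) (fun i => ξ i + c) = D1 ζ ξ)
    (hscale : ∀ c : ℝ, c ≠ 0 → ∀ (ζ : ℝ) (ξ : Fin n → ℝ),
      D1 (c * ζ) (fun i => c * ξ i) = D1 ζ ξ)
    (husc : ∀ (ξ : Fin n → ℝ) (α : ℝ), 0 < α → IsClosed {ζ : ℝ | α ≤ D1 ζ ξ})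
    (PCD : E → (Fin n → E) → ℝ)
    (hPCD : ∀ z x, PCD z x = sInf {v : ℝ | ∃ r : Fin m → ℝ, (∑ j, r j ^ 2) = 1 ∧
      v = D1 (∑ j, r j * (inner ℝ z (y j) : ℝ))
        (fun i => ∑ j, r j * (inner ℝ (x i) (y j) : ℝ))})
    (x : Fin n → E) :
    (∀ (z : E) (l : ℝ), 0 < l → PCD (l • z) (fun i => l • x i) = PCD z x) ∧
      (∀ (z : E), ∀ b ∈ Submodule.span ℝ (Set.range y),
        PCD (z + b) (fun i => x i + b) = PCD z x) ∧
      (∀ α : ℝ, 0 < α → IsClosed {z : E | α ≤ PCD z x}) := by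
  have : Nonempty (Fin m) := ⟨⟨0, hm⟩⟩
  obtain ⟨smul_eq, add_eq, isClosed⟩ := principal_component_depth_props_general y D1
    (fun ζ ξ => (hD101 ζ ξ).1) htrans hscale husc PCD hPCD x
  exact ⟨fun z l hl => smul_eq z l hl.ne', fun z b _ => add_eq z b, isClosed⟩
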